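/- arXiv:2504.18302 — 3 statements merged into one kernel-verified Lean document; each statement's English description precedes it below -/
import Mathlib

section
/- Let F=(V,E) be a forest and let D ⊆ V. Then at least one of the following holds: (i) D = ∅; (ii) there is a vertex v ∈ D whose degree in F is at most 1; (iii) there is a connected component C of F − D such that exactly one vertex of D is adjacent in F to a vertex of C, i.e. |N_F(V(C)) ∩ D| = 1. -/
/-! Preliminary definitions: rooted tree decompositions, `S`-traces, `S`-nice and
slim tree decompositions, following Chapelle et al. -/

/-- A walk in `G` all of whose vertices lie in the set `W`. -/
def SimpleGraph.ReachableIn {V : Type} (G : SimpleGraph V) (W : Set V) (u v : V) : Prop :=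
  ∃ p : G.Walk u v, ∀ x ∈ p.support, x ∈ W

/-- The open neighborhood of a set of vertices. -/
def SimpleGraph.nbhdSet {V : Type} (G : SimpleGraph V) (W : Set V) : Set V :=
  {x | x ∉ W ∧ ∃ w ∈ W, G.Adj w x}

/-- The vertex set of the connected component of `G − X` that contains `v`
(assuming `v ∉ X`). -/
def SimpleGraph.compOutside {V : Type} (G : SimpleGraph V) (X : Set V) (v : V) : Set V :=
  {w | G.ReachableIn Xᶜ v w}

/-- A rooted tree decomposition of a graph `G` on vertex type `V`, with node type `ι`.
The rooted tree is given by a parent function: the root is a fixed point of `parent`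
and every node reaches the root by iterating `parent`.  The bags satisfy the three
usual conditions of a tree decomposition; connectedness of `{t | v ∈ bag t}` is
expressed by the existence of a highest node `m` containing `v` such that from any
node whose bag contains `v` the whole ancestor chain up to `m` contains `v`. -/
structure RootedTreeDecomp (V ι : Type) (G : SimpleGraph V) where
  root : ι
  parent : ι → ι
  parent_root : parent root = root
  reaches_root : ∀ t : ι, ∃ n : ℕ, parent^[n] t = root
  bag : ι → Set V
  bags_cover : ∀ v : V, ∃ t : ι, v ∈ bag t
  bags_of_edges : ∀ ⦃u v : V⦄, G.Adj u v → ∃ t : ι, u ∈ bag t ∧ v ∈ bag t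
  bags_connected : ∀ v : V, ∃ m : ι, v ∈ bag m ∧
    ∀ t : ι, v ∈ bag t → ∃ n : ℕ, parent^[n] t = m ∧ ∀ i ≤ n, v ∈ bag (parent^[i] t)

namespace RootedTreeDecomp

variable {V ι : Type} {G : SimpleGraph V}

/-- `t'` lies in the subtree `T_t` rooted at `t`; equivalently, `t` is an
ancestor (possibly equal) of `t'`. -/
def InSubtree (𝒯 : RootedTreeDecomp V ι G) (t t' : ι) : Prop :=
  ∃ n : ℕ, 𝒯.parent^[n] t' = t

/-- `t` is the parent of `t'`. -/
def IsParent (𝒯 : RootedTreeDecomp V ι G) (t t' : ι) : Prop :=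
  t' ≠ 𝒯.root ∧ 𝒯.parent t' = t

/-- `V_t`: the union of the bags of the nodes of the subtree rooted at `t`. -/
def Vt (𝒯 : RootedTreeDecomp V ι G) (t : ι) : Set V :=
  {v | ∃ t', 𝒯.InSubtree t t' ∧ v ∈ 𝒯.bag t'}

/-- `L_t = V_t ∖ X_t`. -/
def Lt (𝒯 : RootedTreeDecomp V ι G) (t : ι) : Set V := 𝒯.Vt t \ 𝒯.bag t

/-- `R_t = V ∖ V_t`. -/
def Rt (𝒯 : RootedTreeDecomp V ι G) (t : ι) : Set V := (𝒯.Vt t)ᶜ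

/-- `L_t^S = L_t ∩ S`. -/
def LS (𝒯 : RootedTreeDecomp V ι G) (S : Set V) (t : ι) : Set V := 𝒯.Lt t ∩ S

/-- `X_t^S = X_t ∩ S`. -/
def XS (𝒯 : RootedTreeDecomp V ι G) (S : Set V) (t : ι) : Set V := 𝒯.bag t ∩ S

/-- `R_t^S = R_t ∩ S`. -/
def RS (𝒯 : RootedTreeDecomp V ι G) (S : Set V) (t : ι) : Set V := 𝒯.Rt t ∩ S

/-- The `S`-trace of a node `t`. -/
def STrace (𝒯 : RootedTreeDecomp V ι G) (S : Set V) (t : ι) : Set V × Set V × Set V :=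
  (𝒯.LS S t, 𝒯.XS S t, 𝒯.RS S t)

/-- Every bag has size at most `k + 1`, i.e. the width is at most `k`. -/
def WidthAtMost (𝒯 : RootedTreeDecomp V ι G) (k : ℕ) : Prop :=
  ∀ t : ι, (𝒯.bag t).ncard ≤ k + 1

/-- The width of the decomposition (max bag size minus one) is exactly `k`. -/
def HasWidth (𝒯 : RootedTreeDecomp V ι G) (k : ℕ) : Prop :=
  𝒯.WidthAtMost k ∧ ∃ t : ι, (𝒯.bag t).ncard = k + 1

/-- `t'` is an `S`-child of `t`. -/
def IsSChild (𝒯 : RootedTreeDecomp V ι G) (S : Set V) (t t' : ι) : Prop :=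
  𝒯.IsParent t t' ∧ ((𝒯.LS S t' ∪ 𝒯.XS S t') \ (𝒯.RS S t ∪ 𝒯.XS S t)).Nonempty

/-- `t` is an `S`-bottom node: `L_t^S ≠ ∅` and `t` is the bottom node of the
directed path of its own `S`-trace (every node with the same `S`-trace is an
ancestor of `t`). -/
def IsSBottom (𝒯 : RootedTreeDecomp V ι G) (S : Set V) (t : ι) : Prop :=
  (𝒯.LS S t).Nonempty ∧ ∀ t', 𝒯.STrace S t' = 𝒯.STrace S t → 𝒯.InSubtree t' t

/-- `t` admits the `S`-operation `introduce(v)`. -/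
def AdmitsIntroduce (𝒯 : RootedTreeDecomp V ι G) (S : Set V) (t : ι) (v : V) : Prop :=
  ∃ t₁, 𝒯.IsSChild S t t₁ ∧ (∀ t₂, 𝒯.IsSChild S t t₂ → t₂ = t₁) ∧
    v ∈ S ∧ v ∉ 𝒯.bag t₁ ∧ 𝒯.XS S t = 𝒯.XS S t₁ ∪ {v}

/-- `t` admits the `S`-operation `forget(v)`. -/
def AdmitsForget (𝒯 : RootedTreeDecomp V ι G) (S : Set V) (t : ι) (v : V) : Prop :=
  ∃ t₁, 𝒯.IsSChild S t t₁ ∧ (∀ t₂, 𝒯.IsSChild S t t₂ → t₂ = t₁) ∧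
    v ∈ S ∧ v ∈ 𝒯.bag t₁ ∧ 𝒯.XS S t = 𝒯.XS S t₁ \ {v}

/-- `t` admits the `S`-operation `join` with the two `S`-children `t₁, t₂`. -/
def AdmitsJoin (𝒯 : RootedTreeDecomp V ι G) (S : Set V) (t t₁ t₂ : ι) : Prop :=
  t₁ ≠ t₂ ∧ 𝒯.IsSChild S t t₁ ∧ 𝒯.IsSChild S t t₂ ∧
    (∀ t₃, 𝒯.IsSChild S t t₃ → t₃ = t₁ ∨ t₃ = t₂) ∧
    𝒯.XS S t₁ ∪ 𝒯.XS S t₂ ⊆ 𝒯.XS S t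

/-- `S`-nice tree decomposition: bags along tree edges are comparable and differ in
size by at most one, and every `S`-bottom node admits one of the `S`-operations. -/
def IsSNice (𝒯 : RootedTreeDecomp V ι G) (S : Set V) : Prop :=
  (∀ t t' : ι, 𝒯.IsParent t' t →
      (𝒯.bag t ⊆ 𝒯.bag t' ∨ 𝒯.bag t' ⊆ 𝒯.bag t) ∧
      (𝒯.bag t).ncard ≤ (𝒯.bag t').ncard + 1 ∧ (𝒯.bag t').ncard ≤ (𝒯.bag t).ncard + 1) ∧
  ∀ t : ι, 𝒯.IsSBottom S t →
    (∃ v, 𝒯.AdmitsIntroduce S t v) ∨ (∃ v, 𝒯.AdmitsForget S t v) ∨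
      (∃ t₁ t₂, 𝒯.AdmitsJoin S t t₁ t₂)

/-- Nice tree decomposition: root and leaves have empty bags, and every internal
node is an introduce, forget, or join node. -/
def IsNice (𝒯 : RootedTreeDecomp V ι G) : Prop :=
  𝒯.bag 𝒯.root = ∅ ∧
  (∀ t : ι, (∀ t', ¬𝒯.IsParent t t') → 𝒯.bag t = ∅) ∧
  ∀ t : ι, (∃ t', 𝒯.IsParent t t') →
    (∃ t', 𝒯.IsParent t t' ∧ (∀ t'', 𝒯.IsParent t t'' → t'' = t') ∧
      ((∃ v, v ∉ 𝒯.bag t' ∧ 𝒯.bag t = 𝒯.bag t' ∪ {v}) ∨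
        (∃ v, v ∈ 𝒯.bag t' ∧ 𝒯.bag t = 𝒯.bag t' \ {v}))) ∨
    (∃ t₁ t₂, t₁ ≠ t₂ ∧ 𝒯.IsParent t t₁ ∧ 𝒯.IsParent t t₂ ∧
      (∀ t₃, 𝒯.IsParent t t₃ → t₃ = t₁ ∨ t₃ = t₂) ∧
      𝒯.bag t = 𝒯.bag t₁ ∧ 𝒯.bag t = 𝒯.bag t₂)

/-- A set of nodes inducing a connected subtree of the tree: it contains a node `m`
such that from every node of the set the whole ancestor chain up to `m` stays in
the set. -/
def ConnectedNodeSet (𝒯 : RootedTreeDecomp V ι G) (A : Set ι) : Prop :=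
  ∃ m ∈ A, ∀ t ∈ A, ∃ n : ℕ, 𝒯.parent^[n] t = m ∧ ∀ i ≤ n, 𝒯.parent^[i] t ∈ A

/-- A full join tree: a non-trivial inclusion-maximal connected set of nodes all of
which share one and the same full bag `X` (of size `k + 1`). -/
def IsFullJoinTree (𝒯 : RootedTreeDecomp V ι G) (k : ℕ) (A : Set ι) (X : Set V) : Prop :=
  A.Nontrivial ∧ 𝒯.ConnectedNodeSet A ∧ X.ncard = k + 1 ∧ (∀ t ∈ A, 𝒯.bag t = X) ∧
  ∀ A' : Set ι, A ⊆ A' → 𝒯.ConnectedNodeSet A' → (∀ t ∈ A', 𝒯.bag t = X) → A' = A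

/-- `m` is the root (top node) of the node set `A`. -/
def IsTopOf (𝒯 : RootedTreeDecomp V ι G) (A : Set ι) (m : ι) : Prop :=
  m ∈ A ∧ ∀ t ∈ A, 𝒯.InSubtree m t

/-- The condition on a pair `(u, ti)` appearing in condition (7) of slimness:
either `ti` belongs to `T'_C` (it is an `S`-child of a node of the full join tree
`A` but is not itself in `A`) and `u ∈ V_{ti}`, or `ti` is the parent of the root
`tr` of the full join tree and `u ∈ V ∖ V_{tr}`. -/
def FullJoinBranch (𝒯 : RootedTreeDecomp V ι G) (S : Set V) (A : Set ι) (tr : ι)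
    (u : V) (ti : ι) : Prop :=
  (ti ∉ A ∧ (∃ ta ∈ A, 𝒯.IsSChild S ta ti) ∧ u ∈ 𝒯.Vt ti) ∨
  (tr ≠ 𝒯.root ∧ ti = 𝒯.parent tr ∧ u ∉ 𝒯.Vt tr)

/-- Slim `S`-nice tree decomposition of width `k` (the seven conditions of the
paper; a bag is *full* if it has size `k + 1`). -/
def IsSlim (𝒯 : RootedTreeDecomp V ι G) (S : Set V) (k : ℕ) : Prop :=
  -- (1) the root is not an S-bottom node
  (¬𝒯.IsSBottom S 𝒯.root) ∧
  -- (2) S-bottom nodes with two S-children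
  (∀ t t₁ t₂ : ι, 𝒯.IsSBottom S t → t₁ ≠ t₂ → 𝒯.IsSChild S t t₁ → 𝒯.IsSChild S t t₂ →
    (∃ A X, 𝒯.IsFullJoinTree k A X ∧ t ∈ A) ∨
      ((𝒯.bag t₁).ncard ≠ k + 1 ∧ (𝒯.bag t₂).ncard ≠ k + 1 ∧
        (𝒯.bag t₁).ncard ≤ (𝒯.bag t).ncard ∧ (𝒯.bag t₂).ncard ≤ (𝒯.bag t).ncard ∧
        ∀ tp, 𝒯.IsParent tp t →
          (𝒯.bag tp).ncard ≠ k + 1 ∧ (𝒯.bag tp).ncard ≤ (𝒯.bag t).ncard)) ∧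
  -- (3) S-bottom nodes with a non-full bag
  (∀ t tp : ι, 𝒯.IsSBottom S t → (𝒯.bag t).ncard ≠ k + 1 → 𝒯.IsParent tp t →
    𝒯.bag t = 𝒯.bag tp ∧ ∀ t'', 𝒯.IsSChild S tp t'' → t'' = t) ∧
  -- (4) S-bottom nodes admitting forget(v)
  (∀ t v t', 𝒯.IsSBottom S t → 𝒯.AdmitsForget S t v → 𝒯.IsSChild S t t' →
    (𝒯.bag t').ncard ≠ k + 1 →
    (∀ t₁ t₂, 𝒯.IsSChild S t' t₁ → 𝒯.IsSChild S t' t₂ → t₁ = t₂) ∧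
      ∀ t'', 𝒯.IsSChild S t' t'' → 𝒯.bag t' = 𝒯.bag t'') ∧
  -- (5) parents of S-bottom nodes with non-full bags
  (∀ t tp, 𝒯.IsSBottom S t → 𝒯.IsParent tp t → (𝒯.bag tp).ncard ≠ k + 1 →
    tp = 𝒯.root ∨ ∀ tpp, 𝒯.IsParent tpp tp → ¬𝒯.IsSBottom S tpp) ∧
  -- (6) nodes of full join trees
  (∀ A X, 𝒯.IsFullJoinTree k A X → ∀ t ∈ A,
    𝒯.IsSBottom S t ∧ ∃ t₁ t₂, t₁ ≠ t₂ ∧ 𝒯.IsSChild S t t₁ ∧ 𝒯.IsSChild S t t₂) ∧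
  -- (7) branching condition of full join trees
  (∀ A X tr, 𝒯.IsFullJoinTree k A X → 𝒯.IsTopOf A tr →
    ∀ v ∈ X \ S, ∃ u₁ u₂ u₃ : V, ∃ t₁ t₂ t₃ : ι,
      u₁ ≠ u₂ ∧ u₁ ≠ u₃ ∧ u₂ ≠ u₃ ∧ t₁ ≠ t₂ ∧ t₁ ≠ t₃ ∧ t₂ ≠ t₃ ∧
      (G.Adj v u₁ ∧ u₁ ∉ X ∧ (∃ s ∈ S, G.ReachableIn Xᶜ u₁ s) ∧
        𝒯.FullJoinBranch S A tr u₁ t₁) ∧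
      (G.Adj v u₂ ∧ u₂ ∉ X ∧ (∃ s ∈ S, G.ReachableIn Xᶜ u₂ s) ∧
        𝒯.FullJoinBranch S A tr u₂ t₂) ∧
      (G.Adj v u₃ ∧ u₃ ∉ X ∧ (∃ s ∈ S, G.ReachableIn Xᶜ u₃ s) ∧
        𝒯.FullJoinBranch S A tr u₃ t₃))

end RootedTreeDecomp

/-- `tw(G) ≤ k`: `G` admits a (rooted) tree decomposition of width at most `k`. -/
def SimpleGraph.TreewidthAtMost {V : Type} (G : SimpleGraph V) (k : ℕ) : Prop :=
  ∃ (ι : Type) (𝒯 : RootedTreeDecomp V ι G), 𝒯.WidthAtMost k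

/-!
Suppose `D` is nonempty and every alternative fails. Fix `u ∈ D` and, `D` being finite, let `v` be a
vertex of `D` farthest from `u` in its component. Since `v` has two neighbors and `F` has no cycle,
some neighbor `w` of `v` lies off the path from `u` to `v`. Either `w ∈ D`, or the component of
`F - D` containing `w` has a neighbor in `D` other than `v`; in both cases a path leaving `v`
through `w` reaches `D`. Paths in a forest concatenate as long as they do not backtrack, and they
realize distances, so this vertex of `D` is farther from `u` than `v` is.
-/

section Forest

variable {V : Type*} {F : SimpleGraph V} {u v w d : V}

theorem length_eq_dist_of_isAcyclic (hF : F.IsAcyclic) {p : F.Walk u v} (hp : p.IsPath) :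
    p.length = F.dist u v := by
  obtain ⟨q, hq, hlength⟩ := p.reachable.exists_path_of_dist
  have hpq : p = q := congrArg Subtype.val ((hF.subsingleton_path u v).elim ⟨p, hp⟩ ⟨q, hq⟩)
  rw [hpq, hlength]

theorem exists_adj_notMem_support_of_isAcyclic (hF : F.IsAcyclic) {p : F.Walk u v} (hp : p.IsPath)
    (hdeg : 1 < (F.neighborSet v).encard) : ∃ w, F.Adj v w ∧ w ∉ p.support := by
  by_contra! hsupport
  have hpenultimate (x : V) (hx : F.Adj v x) : x = p.penultimate :=
    hF.eq_penultimate_of_adj_end hp hx (hsupport x hx)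
  exact hdeg.not_ge <| Set.encard_le_one_iff.2 fun x y hx hy =>
    (hpenultimate x hx).trans (hpenultimate y hy).symm

theorem isPath_append_cons_of_isAcyclic (hF : F.IsAcyclic) {p : F.Walk u v} (hp : p.IsPath)
    {h : F.Adj v w} (hw : w ∉ p.support) {q : F.Walk w d} (hq : (q.cons h).IsPath) :
    (p.append (q.cons h)).IsPath := by
  rw [hF.isPath_iff_isChain, SimpleGraph.Walk.edges_append, List.isChain_append]
  refine ⟨(hF.isPath_iff_isChain _).1 hp, (hF.isPath_iff_isChain _).1 hq, ?_⟩
  rintro _ hlast _ hhead rfl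
  have hedge : s(v, w) ∈ p.edges := by
    simp only [SimpleGraph.Walk.edges_cons, List.head?_cons, Option.mem_some_iff] at hhead
    exact hhead ▸ List.mem_of_mem_getLast? hlast
  exact hw (p.snd_mem_support_of_mem_edges hedge)

end Forest

section Components

variable {V : Type} {G : SimpleGraph V} {D : Set V} {u v w c d : V}

theorem mem_nbhdSet_compOutside_of_adj (hv : v ∈ D) (hw : w ∉ D) (hadj : G.Adj v w) :
    v ∈ G.nbhdSet (G.compOutside D w) := by
  have hvC : v ∉ G.compOutside D w := fun ⟨p, hp⟩ => hp v p.end_mem_support hv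
  have hwC : w ∈ G.compOutside D w := ⟨.nil, by simpa using hw⟩
  exact ⟨hvC, w, hwC, hadj.symm⟩

theorem exists_isPath_of_mem_compOutside (hc : c ∈ G.compOutside D w) (hcd : G.Adj c d)
    (hd : d ∈ D) : ∃ q : G.Walk w d, q.IsPath ∧ ∀ x ∈ q.support, x ∈ D → x = d := by
  classical
  obtain ⟨p, hp⟩ := hc
  have hoff : ∀ x ∈ p.bypass.support, x ∉ D := fun x hx =>
    hp x (p.support_bypass_subset_support hx)
  refine ⟨p.bypass.concat hcd, p.bypass_isPath.concat (fun h => hoff d h hd) hcd,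
    fun x hx hxD => ?_⟩
  rw [SimpleGraph.Walk.support_concat, List.mem_append, List.mem_singleton] at hx
  exact hx.resolve_left fun h => hoff x h hxD

theorem exists_isPath_cons_of_ncard_ne_one (hv : v ∈ D) (hadj : G.Adj v w)
    (hcomp : w ∉ D → (G.nbhdSet (G.compOutside D w) ∩ D).ncard ≠ 1) :
    ∃ d ∈ D, ∃ q : G.Walk w d, (q.cons hadj).IsPath := by
  by_cases hw : w ∈ D
  · exact ⟨w, hw, .nil, SimpleGraph.Walk.IsPath.of_adj hadj⟩
  have hvN : v ∈ G.nbhdSet (G.compOutside D w) ∩ D :=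
    ⟨mem_nbhdSet_compOutside_of_adj hv hw hadj, hv⟩
  obtain ⟨d, ⟨⟨-, c, hc, hcd⟩, hd⟩, hdv⟩ :
      ∃ d ∈ G.nbhdSet (G.compOutside D w) ∩ D, d ≠ v := by
    by_contra! hunique
    exact hcomp hw (Set.ncard_eq_one.2 ⟨v, Set.eq_singleton_iff_unique_mem.2 ⟨hvN, hunique⟩⟩)
  obtain ⟨q, hq, hqD⟩ := exists_isPath_of_mem_compOutside hc hcd hd
  exact ⟨d, hd, q, hq.cons fun hvq => hdv (hqD v hvq hv).symm⟩

theorem exists_dist_lt_of_isAcyclic (hG : G.IsAcyclic) (hv : v ∈ D)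
    (huv : G.Reachable u v) (hdeg : 1 < (G.neighborSet v).encard)
    (hcomp : ∀ w, w ∉ D → (G.nbhdSet (G.compOutside D w) ∩ D).ncard ≠ 1) :
    ∃ d ∈ D, G.Reachable u d ∧ G.dist u v < G.dist u d := by
  obtain ⟨p, hp, hlength⟩ := huv.exists_path_of_dist
  obtain ⟨w, hvw, hwp⟩ := exists_adj_notMem_support_of_isAcyclic hG hp hdeg
  obtain ⟨d, hd, q, hq⟩ := exists_isPath_cons_of_ncard_ne_one hv hvw (hcomp w)
  have hpath : (p.append (q.cons hvw)).IsPath := isPath_append_cons_of_isAcyclic hG hp hwp hq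
  refine ⟨d, hd, (p.append (q.cons hvw)).reachable, ?_⟩
  calc G.dist u v = p.length := hlength.symm
    _ < (p.append (q.cons hvw)).length := by simp
    _ = G.dist u d := length_eq_dist_of_isAcyclic hG hpath

end Components

-- The degree is an `encard`: on an infinite neighborhood `ncard` would be `0`.
theorem statement11_general {V : Type} {F : SimpleGraph V} (hF : F.IsAcyclic) {D : Set V}
    (hD : D.Finite) :
    D = ∅ ∨ (∃ v ∈ D, (F.neighborSet v).encard ≤ 1) ∨
      (∃ v, v ∉ D ∧ (F.nbhdSet (F.compOutside D v) ∩ D).ncard = 1) := by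
  by_contra! ⟨⟨u, hu⟩, hdeg, hcomp⟩
  obtain ⟨v, ⟨hv, huv⟩, hfarthest⟩ : ∃ v ∈ D ∩ {x | F.Reachable u x},
      ∀ x ∈ D ∩ {x | F.Reachable u x}, F.dist u x ≤ F.dist u v :=
    Set.exists_max_image _ (F.dist u) (hD.inter_of_left _) ⟨u, hu, .refl u⟩
  obtain ⟨d, hd, hud, hlt⟩ := exists_dist_lt_of_isAcyclic hF hv huv (hdeg v hv) hcomp
  exact (hfarthest d ⟨hd, hud⟩).not_gt hlt

/-- For a forest `F` and `D ⊆ V`: either `D = ∅`, or some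
`v ∈ D` has degree at most one in `F`, or some connected component `C` of `F − D`
satisfies `|N_F(V(C)) ∩ D| = 1`. -/
theorem statement11 {V : Type} [Fintype V] [DecidableEq V] (F : SimpleGraph V)
    (hF : F.IsAcyclic) (D : Set V) :
    D = ∅ ∨ (∃ v ∈ D, (F.neighborSet v).ncard ≤ 1) ∨
      (∃ v, v ∉ D ∧ (F.nbhdSet (F.compOutside D v) ∩ D).ncard = 1) := by
  exact (statement11_general hF D.toFinite).imp_right <| .imp_left fun ⟨v, hv, hdeg⟩ =>
    ⟨v, hv, by exact_mod_cast (Set.ncard_le_encard _).trans hdeg⟩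
end

section
/- Let G=(V,E) be a graph and let X ⊆ V be nonempty such that G[X] is a complete graph, C := G − X is a tree, and N_G(V(C)) = X. If there exists a vertex v ∈ V(C) such that for every connected component C' of C − v there is a vertex u_{C'} ∈ X with N_G(V(C')) ⊆ (X ∪ {v}) ∖ {u_{C'}}, then tw(G) = |X|; otherwise tw(G) = |X| + 1. -/
/-! Lower bounds: the nodes whose bags meet a connected vertex set form a subtree, and subtrees of
a tree have the Helly property, so some bag meets all branch sets of a complete minor; a `K_{n+2}`
minor therefore forces treewidth greater than `n`. The singletons of `X` together with `C` give
`K_{|X|+1}`. If for every `v ∈ C` some component of `C - v` is adjacent to all of `X`, let `f v` be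
the neighbour of `v` in that component. A tree has fewer edges than vertices, so `v ↦ {v, f v}`
is not injective, and the two ends of some edge of `C` are swapped by `f`: the two sides of that
edge, together with the singletons of `X`, give `K_{|X|+2}`.

Upper bounds: root `C` at `v` and give every `t ∈ C` the bag consisting of `t`, its parent, and
either all of `X`, or, for `t ≠ v`, only the part of `X` adjacent to the component of `C - v`
containing `t`. -/

section Components

variable {V : Type} {G : SimpleGraph V} {X : Set V} {v w : V}

lemma mem_compOutside_self (hw : w ∉ X) : w ∈ G.compOutside X w :=
  ⟨.nil, by simpa using hw⟩

lemma compOutside_subset_compl : G.compOutside X w ⊆ Xᶜ :=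
  fun _ ⟨p, hp⟩ => hp _ p.end_mem_support

lemma compOutside_eq_of_adj (h : G.Adj v w) (hv : v ∉ X) (hw : w ∉ X) :
    G.compOutside X v = G.compOutside X w := by
  refine subset_antisymm ?_ ?_
  · rintro y ⟨p, hp⟩
    exact ⟨.cons h.symm p, by simpa using ⟨hw, hp⟩⟩
  · rintro y ⟨p, hp⟩
    exact ⟨.cons h p, by simpa using ⟨hv, hp⟩⟩

lemma compOutside_eq_of_mem (h : w ∈ G.compOutside X v) :
    G.compOutside X v = G.compOutside X w := by
  obtain ⟨p, hp⟩ := h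
  induction p with
  | nil => rfl
  | cons hadj p ih =>
    simp only [SimpleGraph.Walk.support_cons, List.mem_cons, forall_eq_or_imp] at hp
    exact (compOutside_eq_of_adj hadj hp.1 (hp.2 _ p.start_mem_support)).trans (ih hp.2)

lemma connected_induce_compOutside (hw : w ∉ X) : (G.induce (G.compOutside X w)).Connected := by
  refine SimpleGraph.induce_connected_of_patches w (mem_compOutside_self hw) ?_
  rintro y ⟨p, hp⟩
  refine ⟨{x | x ∈ p.support}, fun x hx => ?_, p.start_mem_support, p.end_mem_support,
    p.connected_induce_support.preconnected _ _⟩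
  classical
  exact ⟨p.takeUntil x hx, fun z hz => hp z (p.support_takeUntil_subset_support hx hz)⟩

lemma nbhdSet_compOutside_subset : G.nbhdSet (G.compOutside X w) ⊆ X := by
  rintro x ⟨hx, y, hy, hyx⟩
  by_contra hxX
  refine hx ?_
  rw [compOutside_eq_of_mem hy, compOutside_eq_of_adj hyx (compOutside_subset_compl hy) hxX]
  exact mem_compOutside_self hxX

lemma exists_nbhdSet_compOutside_subset_diff_iff {Y : Set V} :
    (∃ u ∈ X, G.nbhdSet (G.compOutside Y w) ⊆ Y \ {u}) ↔
      ¬X ⊆ G.nbhdSet (G.compOutside Y w) := by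
  simp only [Set.subset_sdiff, nbhdSet_compOutside_subset, true_and, Set.disjoint_singleton_right,
    Set.not_subset]

lemma exists_adj_compOutside_eq (hX : (G.induce Xᶜ).Preconnected) (hv : v ∉ X) (hw : w ∉ X)
    (hwv : w ≠ v) :
    ∃ z ∉ X, G.Adj v z ∧ G.compOutside (X ∪ {v}) z = G.compOutside (X ∪ {v}) w := by
  obtain ⟨p, hp⟩ := hX.exists_isPath ⟨v, hv⟩ ⟨w, hw⟩
  cases p with
  | nil => exact absurd rfl hwv
  | @cons _ z _ hvz p =>
    rw [SimpleGraph.Walk.cons_isPath_iff] at hp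
    obtain ⟨q, hq⟩ : ∃ q : G.Walk z w, q.support = p.support.map Subtype.val :=
      ⟨p.map (SimpleGraph.Embedding.induce Xᶜ).toHom, SimpleGraph.Walk.support_map _ _⟩
    refine ⟨z, z.2, hvz, compOutside_eq_of_mem ⟨q, fun x hx => ?_⟩⟩
    rw [hq, List.mem_map] at hx
    obtain ⟨y, hy, rfl⟩ := hx
    rintro (hyX | hyv)
    · exact y.2 hyX
    · exact hp.2 (by rwa [← (Subtype.ext hyv : y = ⟨v, hv⟩)])

end Components

section Trees

lemma mem_edges_of_isAcyclic_induce {V : Type*} {G : SimpleGraph V} {W : Set V} {v w : V}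
    (hW : (G.induce W).IsAcyclic) (hvw : G.Adj v w) (p : G.Walk v w)
    (hp : ∀ x ∈ p.support, x ∈ W) : s(v, w) ∈ p.edges := by
  have hbridge := SimpleGraph.isAcyclic_iff_forall_adj_isBridge.1 hW
    (show (G.induce W).Adj ⟨v, hp _ p.start_mem_support⟩ ⟨w, hp _ p.end_mem_support⟩ from hvw)
  have hmem := SimpleGraph.isBridge_iff_forall_walk_mem_edges.1 hbridge (p.induce W hp)
  have hedges : p.edges = (p.induce W hp).edges.map (Sym2.map Subtype.val) :=
    (congrArg SimpleGraph.Walk.edges (SimpleGraph.Walk.map_induce p hp)).symm.trans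
      (SimpleGraph.Walk.edges_map _ _)
  rw [hedges]
  exact List.mem_map_of_mem hmem

lemma disjoint_compOutside_of_adj {V : Type} {G : SimpleGraph V} {X : Set V} {v w : V}
    (hX : (G.induce Xᶜ).IsAcyclic) (hvw : G.Adj v w) :
    Disjoint (G.compOutside (X ∪ {v}) w) (G.compOutside (X ∪ {w}) v) := by
  rw [Set.disjoint_left]
  rintro y ⟨p, hp⟩ ⟨q, hq⟩
  have hmem := mem_edges_of_isAcyclic_induce hX hvw (q.append p.reverse) (by
    simp only [SimpleGraph.Walk.mem_support_append_iff, SimpleGraph.Walk.support_reverse,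
      List.mem_reverse]
    rintro x (hx | hx) hxX
    · exact hq x hx (.inl hxX)
    · exact hp x hx (.inl hxX))
  rw [SimpleGraph.Walk.edges_append, SimpleGraph.Walk.edges_reverse, List.mem_append,
    List.mem_reverse] at hmem
  rcases hmem with hmem | hmem
  · exact hq w (q.snd_mem_support_of_mem_edges hmem) (.inr rfl)
  · exact hp v (p.fst_mem_support_of_mem_edges hmem) (.inr rfl)

variable {T : Type*} {H : SimpleGraph T}

lemma exists_apply_apply_eq_of_isTree [Finite T] (hH : H.IsTree) (f : T → T)
    (hf : ∀ t, H.Adj t (f t)) : ∃ t, f (f t) = t := by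
  by_contra! hne
  have hinj : Function.Injective fun t => (⟨s(t, f t), hf t⟩ : H.edgeSet) := by
    intro a b hab
    rcases Sym2.eq_iff.1 (congrArg Subtype.val hab) with ⟨h, -⟩ | ⟨h, h'⟩
    · exact h
    · exact absurd (by rw [h', ← h]) (hne a)
  have hle : Nat.card T ≤ Nat.card H.edgeSet := Nat.card_le_card_of_injective _ hinj
  have hcard := (SimpleGraph.isTree_iff_connected_and_card.1 hH).2
  omega

/-- The parent function of the connected graph `H` rooted at `r`: the first step on a chosen path
to `r`. It fixes `r`. -/
noncomputable def parentToward (hH : H.Connected) (r t : T) : T :=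
  (hH.preconnected.exists_isPath t r).choose.snd

lemma parentToward_eq_snd (hH : H.IsTree) {r t : T} {p : H.Walk t r} (hp : p.IsPath) :
    parentToward hH.connected r t = p.snd := by
  have hchoose := (hH.connected.preconnected.exists_isPath t r).choose_spec
  rw [parentToward, (hH.existsUnique_path t r).unique hchoose hp]

lemma parentToward_self (hH : H.IsTree) (r : T) : parentToward hH.connected r r = r :=
  parentToward_eq_snd hH .nil

lemma adj_parentToward (hH : H.Connected) {r t : T} (ht : t ≠ r) :
    H.Adj t (parentToward hH r t) :=
  SimpleGraph.Walk.adj_snd (SimpleGraph.Walk.not_nil_of_ne ht)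

lemma exists_iterate_parentToward_eq (hH : H.IsTree) (r t : T) :
    ∃ n : ℕ, (parentToward hH.connected r)^[n] t = r := by
  obtain ⟨p, hp⟩ := hH.connected.preconnected.exists_isPath t r
  induction p with
  | nil => exact ⟨0, rfl⟩
  | cons hadj p ih =>
    obtain ⟨n, hn⟩ := ih hp.of_cons
    refine ⟨n + 1, ?_⟩
    rwa [Function.iterate_succ_apply, parentToward_eq_snd hH hp, SimpleGraph.Walk.snd_cons]

lemma parentToward_eq_or_eq_of_adj (hH : H.IsTree) (r : T) {a b : T} (hab : H.Adj a b) :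
    parentToward hH.connected r a = b ∨ parentToward hH.connected r b = a := by
  obtain ⟨p, hp⟩ := hH.connected.preconnected.exists_isPath a r
  by_cases hb : b ∈ p.support
  · left
    rw [parentToward_eq_snd hH hp, hH.isAcyclic.eq_snd_of_adj_start hp hab hb]
  · right
    rw [parentToward_eq_snd hH (hp.cons hb (h := hab.symm)), SimpleGraph.Walk.snd_cons]

end Trees

namespace RootedTreeDecomp

variable {V ι : Type} {G : SimpleGraph V} {𝒯 : RootedTreeDecomp V ι G} {A A' : Set ι}
  {s t m m' : ι}

/-- The depth of a node, i.e. its distance to the root. -/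
noncomputable def depth (𝒯 : RootedTreeDecomp V ι G) (t : ι) : ℕ :=
  sInf {n | 𝒯.parent^[n] t = 𝒯.root}

lemma depth_parent_lt (ht : t ≠ 𝒯.root) : 𝒯.depth (𝒯.parent t) < 𝒯.depth t := by
  have hroot : 𝒯.parent^[𝒯.depth t] t = 𝒯.root := Nat.sInf_mem (𝒯.reaches_root t)
  obtain ⟨n, hn⟩ : ∃ n, 𝒯.depth t = n + 1 :=
    Nat.exists_eq_succ_of_ne_zero fun h0 => ht (by simpa [h0] using hroot)
  rw [hn] at hroot ⊢
  exact Nat.lt_succ_of_le (Nat.sInf_le hroot)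

lemma InSubtree.eq_or_depth_lt (h : 𝒯.InSubtree s t) : s = t ∨ 𝒯.depth s < 𝒯.depth t := by
  obtain ⟨n, rfl⟩ := h
  induction n generalizing t with
  | zero => exact .inl rfl
  | succ n ih =>
    rw [Function.iterate_succ_apply]
    rcases eq_or_ne t 𝒯.root with rfl | ht
    · rw [𝒯.parent_root]
      exact ih
    · have hlt := depth_parent_lt ht
      rcases ih (t := 𝒯.parent t) with h | h
      · exact .inr (by rwa [h])
      · exact .inr (h.trans hlt)

/-- `m` is an ancestor of `t`, and the tree path between them stays in `A`; thus `A` is a connected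
node set with top node `m ∈ A` when every node of `A` climbs in `A` to `m`. -/
def ClimbsIn (𝒯 : RootedTreeDecomp V ι G) (A : Set ι) (t m : ι) : Prop :=
  ∃ n : ℕ, 𝒯.parent^[n] t = m ∧ ∀ i ≤ n, 𝒯.parent^[i] t ∈ A

namespace ClimbsIn

lemma inSubtree (h : 𝒯.ClimbsIn A t m) : 𝒯.InSubtree m t := by
  obtain ⟨n, hn, -⟩ := h
  exact ⟨n, hn⟩

lemma left_mem (h : 𝒯.ClimbsIn A t m) : t ∈ A := by
  obtain ⟨n, -, hmem⟩ := h
  exact hmem 0 n.zero_le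

lemma mono (hA : A ⊆ A') (h : 𝒯.ClimbsIn A t m) : 𝒯.ClimbsIn A' t m := by
  obtain ⟨n, hn, hmem⟩ := h
  exact ⟨n, hn, fun i hi => hA (hmem i hi)⟩

lemma trans (h : 𝒯.ClimbsIn A s t) (h' : 𝒯.ClimbsIn A t m) : 𝒯.ClimbsIn A s m := by
  obtain ⟨n, rfl, hmem⟩ := h
  obtain ⟨k, rfl, hmem'⟩ := h'
  refine ⟨k + n, Function.iterate_add_apply _ _ _ _, fun i hi => ?_⟩
  rcases le_total i n with hin | hni
  · exact hmem i hin
  · obtain ⟨j, rfl⟩ := Nat.exists_eq_add_of_le' hni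
    rw [Function.iterate_add_apply]
    exact hmem' j (by omega)

lemma climbsIn_or_climbsIn (h : 𝒯.ClimbsIn A t m) (h' : 𝒯.ClimbsIn A' t m') :
    𝒯.ClimbsIn A' m m' ∨ 𝒯.ClimbsIn A m' m := by
  have of_le : ∀ {B : Set ι} {n k : ℕ}, n ≤ k → (∀ i ≤ k, 𝒯.parent^[i] t ∈ B) →
      𝒯.ClimbsIn B (𝒯.parent^[n] t) (𝒯.parent^[k] t) := by
    intro B n k hnk hB
    refine ⟨k - n, by rw [← Function.iterate_add_apply, Nat.sub_add_cancel hnk], fun i hi => ?_⟩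
    rw [← Function.iterate_add_apply]
    exact hB _ (by omega)
  obtain ⟨n, rfl, hmem⟩ := h
  obtain ⟨k, rfl, hmem'⟩ := h'
  exact (le_total n k).imp (of_le · hmem') (of_le · hmem)

end ClimbsIn

lemma nonempty_iInter_of_connectedNodeSet {κ : Type*} [Finite κ] {A : κ → Set ι}
    (hA : ∀ k, 𝒯.ConnectedNodeSet (A k)) (hinter : Pairwise fun j k => (A j ∩ A k).Nonempty) :
    (⋂ k, A k).Nonempty := by
  cases isEmpty_or_nonempty κ
  · exact ⟨𝒯.root, Set.mem_iInter.2 isEmptyElim⟩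
  choose top htop hclimb using hA
  obtain ⟨j, hdeepest⟩ := Finite.exists_max fun k => 𝒯.depth (top k)
  refine ⟨top j, Set.mem_iInter.2 fun k => ?_⟩
  rcases eq_or_ne j k with rfl | hjk
  · exact htop j
  obtain ⟨t, htj, htk⟩ := hinter hjk
  have climb_j : 𝒯.ClimbsIn (A j) t (top j) := hclimb j t htj
  have climb_k : 𝒯.ClimbsIn (A k) t (top k) := hclimb k t htk
  rcases climb_j.climbsIn_or_climbsIn climb_k with h | h
  · exact h.left_mem
  · rcases h.inSubtree.eq_or_depth_lt with heq | hlt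
    · exact heq ▸ htop k
    · exact absurd hlt (hdeepest k).not_gt

lemma connectedNodeSet_inter_nonempty (𝒯 : RootedTreeDecomp V ι G) {B : Set V}
    (hB : (G.induce B).Connected) : 𝒯.ConnectedNodeSet {t | (𝒯.bag t ∩ B).Nonempty} := by
  choose top htop hclimb using 𝒯.bags_connected
  set A := {t | (𝒯.bag t ∩ B).Nonempty}
  have climb_top (b : B) {t : ι} (ht : b.1 ∈ 𝒯.bag t) : 𝒯.ClimbsIn A t (top b) :=
    ClimbsIn.mono (A := {t | b.1 ∈ 𝒯.bag t}) (fun _ hbt => ⟨b, hbt, b.2⟩) (hclimb b t ht)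
  have : Nonempty B := hB.nonempty
  let b₀ : B := Function.argmin fun b : B => 𝒯.depth (top b)
  have hhighest (b : B) : 𝒯.depth (top b₀) ≤ 𝒯.depth (top b) :=
    Function.argmin_le (fun b : B => 𝒯.depth (top b)) b
  have climb_b₀ (b : B) : 𝒯.ClimbsIn A (top b) (top b₀) := by
    induction (SimpleGraph.reachable_iff_reflTransGen b₀ b).1 (hB.preconnected b₀ b) with
    | refl => exact climb_top b₀ (htop b₀)
    | @tail x y _ hxy climb_x =>
      obtain ⟨t, htx, hty⟩ := 𝒯.bags_of_edges hxy
      rcases (climb_top x htx).climbsIn_or_climbsIn (climb_top y hty) with hxy' | hyx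
      · rcases hxy'.climbsIn_or_climbsIn climb_x with h | h
        · exact h
        · rcases h.inSubtree.eq_or_depth_lt with heq | hlt
          · exact heq ▸ climb_top b₀ (htop b₀)
          · exact absurd hlt (hhighest y).not_gt
      · exact hyx.trans climb_x
  refine ⟨top b₀, ⟨b₀, htop b₀, b₀.2⟩, ?_⟩
  rintro t ⟨b, hbt, hb⟩
  exact (climb_top ⟨b, hb⟩ hbt).trans (climb_b₀ ⟨b, hb⟩)

end RootedTreeDecomp

/-- The sets `B i` are the branch sets of a complete minor of `G`: they are connected, pairwise
disjoint, and any two of them are joined by an edge. -/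
structure IsCompleteMinorModel {V κ : Type*} (G : SimpleGraph V) (B : κ → Set V) : Prop where
  connected : ∀ i, (G.induce (B i)).Connected
  disjoint : Pairwise fun i j => Disjoint (B i) (B j)
  adj : Pairwise fun i j => ∃ a ∈ B i, ∃ b ∈ B j, G.Adj a b

namespace IsCompleteMinorModel

lemma singleton_of_isClique {V : Type*} {G : SimpleGraph V} {X : Set V} (hX : G.IsClique X) :
    IsCompleteMinorModel G fun x : X => {x.1} where
  connected _ := SimpleGraph.Connected.of_subsingleton
  disjoint _ _ hxy := Set.disjoint_singleton.2 (Subtype.coe_injective.ne hxy)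
  adj x y hxy := ⟨x, rfl, y, rfl, hX x.2 y.2 (Subtype.coe_injective.ne hxy)⟩

lemma option_elim {V κ : Type*} {G : SimpleGraph V} {B : κ → Set V} {C : Set V}
    (hB : IsCompleteMinorModel G B) (hC : (G.induce C).Connected)
    (hdisj : ∀ i, Disjoint C (B i)) (hadj : ∀ i, ∃ a ∈ C, ∃ b ∈ B i, G.Adj a b) :
    IsCompleteMinorModel G fun i : Option κ => i.elim C B where
  connected
    | none => hC
    | some i => hB.connected i
  disjoint
    | none, none, h => absurd rfl h
    | none, some i, _ => hdisj i
    | some i, none, _ => (hdisj i).symm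
    | some _, some _, h => hB.disjoint (ne_of_apply_ne _ h)
  adj
    | none, none, h => absurd rfl h
    | none, some i, _ => hadj i
    | some i, none, _ =>
      let ⟨a, ha, b, hb, hab⟩ := hadj i
      ⟨b, hb, a, ha, hab.symm⟩
    | some _, some _, h => hB.adj (ne_of_apply_ne _ h)

lemma of_isClique_of_subset_nbhdSet {V : Type} {G : SimpleGraph V} {X C : Set V}
    (hX : G.IsClique X) (hC : (G.induce C).Connected) (hXC : X ⊆ G.nbhdSet C) :
    IsCompleteMinorModel G fun i : Option X => i.elim C fun x => {x.1} :=
  (singleton_of_isClique hX).option_elim hC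
    (fun x => Set.disjoint_singleton_right.2 (hXC x.2).1) fun x =>
      let ⟨a, ha, hax⟩ := (hXC x.2).2
      ⟨a, ha, x, rfl, hax⟩

variable {V κ : Type} {G : SimpleGraph V} {B : κ → Set V}

lemma exists_bag_inter_nonempty {ι : Type} [Finite κ] (hB : IsCompleteMinorModel G B)
    (𝒯 : RootedTreeDecomp V ι G) : ∃ t, ∀ i, (𝒯.bag t ∩ B i).Nonempty := by
  obtain ⟨t, ht⟩ := 𝒯.nonempty_iInter_of_connectedNodeSet
    (fun i => 𝒯.connectedNodeSet_inter_nonempty (hB.connected i)) fun i j hij => by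
      obtain ⟨a, ha, b, hb, hab⟩ := hB.adj hij
      obtain ⟨t, hat, hbt⟩ := 𝒯.bags_of_edges hab
      exact ⟨t, ⟨a, hat, ha⟩, ⟨b, hbt, hb⟩⟩
  exact ⟨t, Set.mem_iInter.1 ht⟩

lemma not_treewidthAtMost [Finite V] (hB : IsCompleteMinorModel G B) {k : ℕ}
    (hk : k + 1 < Nat.card κ) : ¬G.TreewidthAtMost k := by
  rintro ⟨ι, 𝒯, hwidth⟩
  have : Finite κ := Nat.finite_of_card_ne_zero (by omega)
  obtain ⟨t, ht⟩ := hB.exists_bag_inter_nonempty 𝒯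
  choose f hbag hbranch using ht
  have hinj : Function.Injective fun i => (⟨f i, hbag i⟩ : 𝒯.bag t) := by
    intro i j hij
    by_contra hne
    have hfij : f i = f j := congrArg Subtype.val hij
    exact Set.disjoint_left.1 (hB.disjoint hne) (hbranch i) (hfij ▸ hbranch j)
  have hle := Nat.card_le_card_of_injective _ hinj
  rw [Nat.card_coe_set_eq] at hle
  have := hwidth t
  omega

end IsCompleteMinorModel

section LowerBounds

variable {V : Type} [Finite V] {G : SimpleGraph V} {X : Set V}

lemma not_treewidthAtMost_ncard_sub_one {C : Set V} (hXne : X.Nonempty) (hX : G.IsClique X)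
    (hC : (G.induce C).Connected) (hXC : X ⊆ G.nbhdSet C) :
    ¬G.TreewidthAtMost (X.ncard - 1) := by
  refine (IsCompleteMinorModel.of_isClique_of_subset_nbhdSet hX hC hXC).not_treewidthAtMost ?_
  rw [Finite.card_option, Nat.card_coe_set_eq]
  have := (Set.ncard_pos X.toFinite).2 hXne
  omega

lemma not_treewidthAtMost_ncard_of_disjoint {C D : Set V} (hX : G.IsClique X)
    (hC : (G.induce C).Connected) (hD : (G.induce D).Connected) (hXC : X ⊆ G.nbhdSet C)
    (hXD : X ⊆ G.nbhdSet D) (hCD : Disjoint C D) (hadj : ∃ c ∈ C, ∃ d ∈ D, G.Adj c d) :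
    ¬G.TreewidthAtMost X.ncard := by
  have hmodel := (IsCompleteMinorModel.of_isClique_of_subset_nbhdSet hX hD hXD).option_elim hC
    (by rintro (_ | x)
        · exact hCD
        · exact Set.disjoint_singleton_right.2 (hXC x.2).1)
    (by rintro (_ | x)
        · exact hadj
        · obtain ⟨a, ha, hax⟩ := (hXC x.2).2
          exact ⟨a, ha, x, rfl, hax⟩)
  refine hmodel.not_treewidthAtMost ?_
  rw [Finite.card_option, Finite.card_option, Nat.card_coe_set_eq]
  omega

lemma not_treewidthAtMost_ncard (hX : G.IsClique X) (hT : (G.induce Xᶜ).IsTree)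
    (hfull : ∀ v ∉ X, ∃ w ∉ X, w ≠ v ∧ X ⊆ G.nbhdSet (G.compOutside (X ∪ {v}) w)) :
    ¬G.TreewidthAtMost X.ncard := by
  have hstep (v : ↥Xᶜ) : ∃ z : ↥Xᶜ, (G.induce Xᶜ).Adj v z ∧
      X ⊆ G.nbhdSet (G.compOutside (X ∪ {v.1}) z) := by
    obtain ⟨w, hw, hwv, hXw⟩ := hfull v v.2
    obtain ⟨z, hz, hvz, hzw⟩ := exists_adj_compOutside_eq hT.connected.preconnected v.2 hw hwv
    exact ⟨⟨z, hz⟩, hvz, hzw ▸ hXw⟩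
  choose f hadj hXf using hstep
  obtain ⟨v, hswap⟩ := exists_apply_apply_eq_of_isTree hT f hadj
  have hvw : G.Adj v (f v) := hadj v
  have hw : (f v).1 ∉ X ∪ {v.1} := not_or.2 ⟨(f v).2, hvw.ne'⟩
  have hv : v.1 ∉ X ∪ {(f v).1} := not_or.2 ⟨v.2, hvw.ne⟩
  have hXv : X ⊆ G.nbhdSet (G.compOutside (X ∪ {(f v).1}) v) := by
    simpa only [hswap] using hXf (f v)
  exact not_treewidthAtMost_ncard_of_disjoint hX (connected_induce_compOutside hw)
    (connected_induce_compOutside hv) (hXf v) hXv (disjoint_compOutside_of_adj hT.isAcyclic hvw)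
    ⟨_, mem_compOutside_self hw, _, mem_compOutside_self hv, hvw.symm⟩

end LowerBounds

section UpperBounds

variable {V : Type} {G : SimpleGraph V} {X : Set V}

/-- The tree decomposition of `G` along the tree `G - X` rooted at `r`: the bag of `t` consists of
`t`, its parent, and a part `Y t` of `X`. -/
noncomputable def treeOutsideDecomp (hT : (G.induce Xᶜ).IsTree) (r : ↥Xᶜ) (Y : ↥Xᶜ → Set V)
    (hYX : ∀ t, Y t ⊆ X) (hXr : X ⊆ Y r)
    (hYparent : ∀ t, Y t ⊆ Y (parentToward hT.connected r t))
    (hYadj : ∀ t : ↥Xᶜ, ∀ x ∈ X, G.Adj t x → x ∈ Y t) : RootedTreeDecomp V ↥Xᶜ G where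
  root := r
  parent := parentToward hT.connected r
  parent_root := parentToward_self hT r
  reaches_root := exists_iterate_parentToward_eq hT r
  bag t := insert t.1 (insert (parentToward hT.connected r t).1 (Y t))
  bags_cover v := by
    by_cases hv : v ∈ X
    · exact ⟨r, .inr (.inr (hXr hv))⟩
    · exact ⟨⟨v, hv⟩, .inl rfl⟩
  bags_of_edges u v huv := by
    by_cases hu : u ∈ X <;> by_cases hv : v ∈ X
    · exact ⟨r, .inr (.inr (hXr hu)), .inr (.inr (hXr hv))⟩
    · exact ⟨⟨v, hv⟩, .inr (.inr (hYadj ⟨v, hv⟩ u hu huv.symm)), .inl rfl⟩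
    · exact ⟨⟨u, hu⟩, .inl rfl, .inr (.inr (hYadj ⟨u, hu⟩ v hv huv))⟩
    · have hadj : (G.induce Xᶜ).Adj ⟨u, hu⟩ ⟨v, hv⟩ := huv
      rcases parentToward_eq_or_eq_of_adj hT r hadj with h | h
      · exact ⟨⟨u, hu⟩, .inl rfl, .inr (.inl (congrArg Subtype.val h).symm)⟩
      · exact ⟨⟨v, hv⟩, .inr (.inl (congrArg Subtype.val h).symm), .inl rfl⟩
  bags_connected v := by
    by_cases hv : v ∈ X
    · refine ⟨r, .inr (.inr (hXr hv)), fun t ht => ?_⟩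
      have hvY : v ∈ Y t := by
        rcases ht with rfl | rfl | h
        · exact absurd hv t.2
        · exact absurd hv (parentToward hT.connected r t).2
        · exact h
      obtain ⟨n, hn⟩ := exists_iterate_parentToward_eq hT r t
      have hmaps : Set.MapsTo (parentToward hT.connected r) {s | v ∈ Y s} {s | v ∈ Y s} :=
        fun s hs => hYparent s hs
      exact ⟨n, hn, fun i _ => .inr (.inr (hmaps.iterate i hvY))⟩
    · refine ⟨⟨v, hv⟩, .inl rfl, ?_⟩
      rintro t (rfl | rfl | h)
      · exact ⟨0, rfl, fun i hi => by simp [Nat.le_zero.1 hi]⟩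
      · refine ⟨1, rfl, fun i hi => ?_⟩
        rcases Nat.le_one_iff_eq_zero_or_eq_one.1 hi with rfl | rfl
        · exact .inr (.inl rfl)
        · exact .inl rfl
      · exact absurd (hYX t h) hv

lemma treewidthAtMost_ncard_add_one (hT : (G.induce Xᶜ).IsTree) :
    G.TreewidthAtMost (X.ncard + 1) := by
  obtain ⟨r⟩ := hT.connected.nonempty
  refine ⟨_, treeOutsideDecomp hT r (fun _ => X) (fun _ => subset_rfl) subset_rfl
    (fun _ => subset_rfl) (fun _ _ hx _ => hx), fun t => ?_⟩
  exact (Set.ncard_insert_le _ _).trans (Nat.succ_le_succ (Set.ncard_insert_le _ _))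

lemma treewidthAtMost_ncard (hXfin : X.Finite) (hT : (G.induce Xᶜ).IsTree) {v : V} (hv : v ∉ X)
    (hcomp : ∀ w ∉ X, w ≠ v → ¬X ⊆ G.nbhdSet (G.compOutside (X ∪ {v}) w)) :
    G.TreewidthAtMost X.ncard := by
  let r : ↥Xᶜ := ⟨v, hv⟩
  let Y (t : ↥Xᶜ) : Set V := {x ∈ X | t = r ∨ x ∈ G.nbhdSet (G.compOutside (X ∪ {v}) t)}
  have hYX (t : ↥Xᶜ) : Y t ⊆ X := Set.sep_subset _ _
  have notMem {t : ↥Xᶜ} (ht : t ≠ r) : t.1 ∉ X ∪ {v} := by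
    rintro (h | h)
    · exact t.2 h
    · exact ht (Subtype.ext h)
  have hYparent (t : ↥Xᶜ) : Y t ⊆ Y (parentToward hT.connected r t) := by
    rintro x ⟨hx, htx⟩
    rcases eq_or_ne t r with rfl | ht
    · exact ⟨hx, .inl (parentToward_self hT r)⟩
    · refine ⟨hx, or_iff_not_imp_left.2 fun hp => ?_⟩
      have hadj : G.Adj t.1 (parentToward hT.connected r t).1 :=
        adj_parentToward hT.connected ht
      rw [← compOutside_eq_of_adj hadj (notMem ht) (notMem hp)]
      exact htx.resolve_left ht
  have hYadj (t : ↥Xᶜ) (x : V) (hx : x ∈ X) (htx : G.Adj t x) : x ∈ Y t :=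
    ⟨hx, or_iff_not_imp_left.2 fun ht => ⟨fun h => compOutside_subset_compl h (.inl hx),
      t, mem_compOutside_self (notMem ht), htx⟩⟩
  refine ⟨_, treeOutsideDecomp hT r Y hYX (fun x hx => ⟨hx, .inl rfl⟩) hYparent hYadj,
    fun t => ?_⟩
  change (insert t.1 (insert (parentToward hT.connected r t).1 (Y t))).ncard ≤ X.ncard + 1
  rcases eq_or_ne t r with rfl | ht
  · rw [parentToward_self hT, Set.insert_eq_of_mem (Set.mem_insert _ _)]
    exact (Set.ncard_insert_le _ _).trans (Nat.succ_le_succ (Set.ncard_le_ncard (hYX r) hXfin))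
  · obtain ⟨x, hx, hxt⟩ := Set.not_subset.1 (hcomp t t.2 (fun h => ht (Subtype.ext h)))
    have hssub : Y t ⊂ X :=
      ⟨hYX t, fun h => hxt ((h hx).2.resolve_left ht)⟩
    exact (Set.ncard_insert_le _ _).trans (Nat.succ_le_succ
      ((Set.ncard_insert_le _ _).trans (Set.ncard_lt_ncard hssub hXfin)))

end UpperBounds

/-- Let `X ⊆ V` be nonempty with `G[X]` complete, `C := G − X` a
tree, and `N_G(V(C)) = X`.  If there is a vertex `v` of `C` such that every
connected component `C'` of `C − v` has `N_G(V(C')) ⊆ (X ∪ {v}) ∖ {u}` for some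
`u ∈ X`, then `tw(G) = |X|`; otherwise `tw(G) = |X| + 1`. -/
theorem statement13 {V : Type} [Fintype V] [DecidableEq V] (G : SimpleGraph V)
    (X : Set V) (hXne : X.Nonempty)
    (hcomplete : ∀ u ∈ X, ∀ v ∈ X, u ≠ v → G.Adj u v)
    (htreeConn : (G.induce Xᶜ).Connected) (htreeAcyc : (G.induce Xᶜ).IsAcyclic)
    (hN : G.nbhdSet Xᶜ = X)
    (cond : Prop)
    (hcond : cond ↔ ∃ v, v ∉ X ∧ ∀ w, w ∉ X → w ≠ v →
      ∃ u ∈ X, G.nbhdSet (G.compOutside (X ∪ {v}) w) ⊆ (X ∪ {v}) \ {u}) :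
    (cond → G.TreewidthAtMost X.ncard ∧ ¬G.TreewidthAtMost (X.ncard - 1)) ∧
    (¬cond → G.TreewidthAtMost (X.ncard + 1) ∧ ¬G.TreewidthAtMost X.ncard) := by
  have hT : (G.induce Xᶜ).IsTree := ⟨htreeConn, htreeAcyc⟩
  have hX : G.IsClique X := fun u hu v hv => hcomplete u hu v hv
  simp only [exists_nbhdSet_compOutside_subset_diff_iff] at hcond
  refine ⟨fun h => ⟨?_, not_treewidthAtMost_ncard_sub_one hXne hX htreeConn hN.ge⟩,
    fun h => ⟨treewidthAtMost_ncard_add_one hT, not_treewidthAtMost_ncard hX hT ?_⟩⟩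
  · obtain ⟨v, hv, hcomp⟩ := hcond.1 h
    exact treewidthAtMost_ncard X.toFinite hT hv hcomp
  · rw [hcond] at h
    push Not at h
    exact h
end

section
/- Let G=(V,E) be a connected graph, let S ⊆ V, and let 𝒯 be a slim S-nice tree decomposition of G of width k. Let (L^S, X^S, R^S) be an S-trace with L^S ≠ ∅ that occurs in 𝒯, let t_min be the bottom node of its directed path, write X_min = X_{t_min}, and let X_c be the union of the bags of the S-children of t_min. Assume that every connected component C of G − X_min with V(C) ∩ S = ∅ satisfies V(C) ∩ V_t = ∅ for every S-child t of t_min. Define V_L to be the set of all vertices v such that v ∈ L^S ∪ (X_c ∖ X_min) or v is connected in G − X_min to some vertex of L^S ∪ (X_c ∖ X_min). Then for every vertex v ∈ V: v ∈ V_L if and only if t_min has an S-child t with v ∈ V_t ∖ X_min. -/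
/-! Write `X` for the bag of a node `t`. A vertex occurring both inside and outside the subtree
of a child `c` of `t` lies in `X`, by connectedness of its set of nodes; hence `V_c ∖ X` is closed
under adjacency in `G − X`, so a component of `G − X` that meets `V_c ∖ X` lies inside it. The
vertices of `L_t^S`, and those of the bags of `S`-children outside `X`, occur below `S`-children of
`t`, and therefore so does everything connected to them in `G − X`. Conversely, the component of a
vertex below an `S`-child contains some `s ∈ S` by assumption, and `s` occurs below the same child,
so `s ∈ L_t^S`. -/

section ReachableIn

variable {V : Type} {G : SimpleGraph V} {W A : Set V} {u v : V}

theorem reachableIn_symm (h : G.ReachableIn W u v) : G.ReachableIn W v u := by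
  obtain ⟨p, hp⟩ := h
  exact ⟨p.reverse, fun x hx ↦ hp x (by simpa only [SimpleGraph.Walk.support_reverse,
    List.mem_reverse] using hx)⟩

theorem mem_of_reachableIn_of_adj_closed
    (hA : ∀ ⦃x y⦄, x ∈ A → x ∈ W → y ∈ W → G.Adj x y → y ∈ A)
    (h : G.ReachableIn W u v) (hu : u ∈ A) : v ∈ A := by
  obtain ⟨p, hp⟩ := h
  induction p with
  | nil => exact hu
  | cons hadj q ih =>
    rw [SimpleGraph.Walk.support_cons, List.forall_mem_cons] at hp
    exact ih (hA hu hp.1 (hp.2 _ q.start_mem_support) hadj) hp.2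

end ReachableIn

namespace RootedTreeDecomp

variable {V ι : Type} {G : SimpleGraph V} {𝒯 : RootedTreeDecomp V ι G} {S : Set V}
  {a b c t : ι} {u v w : V}

theorem inSubtree_refl (𝒯 : RootedTreeDecomp V ι G) (t : ι) : 𝒯.InSubtree t t :=
  ⟨0, rfl⟩

theorem InSubtree.trans (hab : 𝒯.InSubtree a b) (hbc : 𝒯.InSubtree b c) :
    𝒯.InSubtree a c := by
  obtain ⟨m, rfl⟩ := hab
  obtain ⟨n, rfl⟩ := hbc
  exact ⟨m + n, Function.iterate_add_apply 𝒯.parent m n c⟩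

theorem IsParent.inSubtree (h : 𝒯.IsParent a b) : 𝒯.InSubtree a b :=
  ⟨1, h.2⟩

theorem InSubtree.exists_isParent (h : 𝒯.InSubtree t b) (hne : b ≠ t) :
    ∃ c, 𝒯.IsParent t c ∧ 𝒯.InSubtree c b := by
  obtain ⟨n, hn⟩ := h
  induction n generalizing b with
  | zero => exact absurd hn hne
  | succ n ih =>
    by_cases hparent : 𝒯.parent b = t
    · refine ⟨b, ⟨?_, hparent⟩, 𝒯.inSubtree_refl b⟩
      rintro rfl
      exact hne (𝒯.parent_root.symm.trans hparent)
    · obtain ⟨c, htc, hcb⟩ := ih hparent hn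
      exact ⟨c, htc, hcb.trans ⟨1, rfl⟩⟩

theorem bag_subset_Vt (𝒯 : RootedTreeDecomp V ι G) (t : ι) : 𝒯.bag t ⊆ 𝒯.Vt t :=
  fun _ hv ↦ ⟨t, 𝒯.inSubtree_refl t, hv⟩

theorem Vt_subset_Vt (h : 𝒯.InSubtree a b) : 𝒯.Vt b ⊆ 𝒯.Vt a :=
  fun _ ⟨t', hbt', hv⟩ ↦ ⟨t', h.trans hbt', hv⟩

theorem exists_isParent_mem_Vt_of_mem_Lt (hv : v ∈ 𝒯.Lt t) : ∃ c, 𝒯.IsParent t c ∧ v ∈ 𝒯.Vt c := by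
  obtain ⟨⟨b, htb, hvb⟩, hvt⟩ := hv
  have hne : b ≠ t := fun h ↦ hvt (h ▸ hvb)
  obtain ⟨c, htc, hcb⟩ := htb.exists_isParent hne
  exact ⟨c, htc, b, hcb, hvb⟩

theorem mem_bag_parent_of_mem_Vt_of_mem_bag (hv : v ∈ 𝒯.Vt c) (hvb : v ∈ 𝒯.bag b)
    (hcb : ¬ 𝒯.InSubtree c b) : v ∈ 𝒯.bag (𝒯.parent c) := by
  obtain ⟨a, ⟨j, hj⟩, hva⟩ := hv
  obtain ⟨top, -, htop⟩ := 𝒯.bags_connected v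
  obtain ⟨n, hn, hchain⟩ := htop a hva
  obtain ⟨m, hm, -⟩ := htop b hvb
  have hjn : j < n := by
    by_contra! hnj
    have hctop : 𝒯.InSubtree c top :=
      ⟨j - n, by rw [← hn, ← Function.iterate_add_apply, Nat.sub_add_cancel hnj, hj]⟩
    exact hcb (hctop.trans ⟨m, hm⟩)
  simpa only [Function.iterate_succ_apply', hj] using hchain (j + 1) hjn

theorem mem_Vt_of_adj (hu : u ∈ 𝒯.Vt c) (hup : u ∉ 𝒯.bag (𝒯.parent c)) (h : G.Adj u w) :
    w ∈ 𝒯.Vt c := by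
  obtain ⟨b, hub, hwb⟩ := 𝒯.bags_of_edges h
  have hcb : 𝒯.InSubtree c b :=
    by_contra fun hcb ↦ hup (mem_bag_parent_of_mem_Vt_of_mem_bag hu hub hcb)
  exact ⟨b, hcb, hwb⟩

theorem mem_Vt_sdiff_bag_of_reachableIn (hc : 𝒯.IsParent t c)
    (h : G.ReachableIn (𝒯.bag t)ᶜ u v) (hu : u ∈ 𝒯.Vt c \ 𝒯.bag t) :
    v ∈ 𝒯.Vt c \ 𝒯.bag t := by
  refine mem_of_reachableIn_of_adj_closed (fun x y hx _ hy hxy ↦ ⟨?_, hy⟩) h hu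
  exact mem_Vt_of_adj hx.1 (hc.2 ▸ hx.2) hxy

theorem LS_union_XS (𝒯 : RootedTreeDecomp V ι G) (S : Set V) (t : ι) :
    𝒯.LS S t ∪ 𝒯.XS S t = 𝒯.Vt t ∩ S := by
  rw [LS, XS, ← Set.union_inter_distrib_right, Lt, Set.sdiff_union_of_subset (𝒯.bag_subset_Vt t)]

theorem RS_union_XS (𝒯 : RootedTreeDecomp V ι G) (S : Set V) (t : ι) :
    𝒯.RS S t ∪ 𝒯.XS S t = S \ 𝒯.Lt t := by
  rw [RS, XS, ← Set.union_inter_distrib_right, Rt, Lt, Set.sdiff_eq, Set.inter_comm S,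
    Set.compl_sdiff, Set.union_comm]

theorem isSChild_iff :
    𝒯.IsSChild S t c ↔ 𝒯.IsParent t c ∧ ((𝒯.Vt c \ 𝒯.bag t) ∩ S).Nonempty := by
  refine and_congr_right fun hc ↦ ?_
  have hsub : 𝒯.Vt c ⊆ 𝒯.Vt t := Vt_subset_Vt hc.inSubtree
  have heq : (𝒯.Vt c ∩ S) \ (S \ 𝒯.Lt t) = (𝒯.Vt c \ 𝒯.bag t) ∩ S := by
    ext x
    have := @hsub x
    simp only [Lt, Set.mem_sdiff, Set.mem_inter_iff]
    tauto
  rw [LS_union_XS, RS_union_XS, heq]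

/-- The union of the sets `V_c ∖ X_t` over the `S`-children `c` of `t`. -/
def sChildrenPart (𝒯 : RootedTreeDecomp V ι G) (S : Set V) (t : ι) : Set V :=
  {v | ∃ c, 𝒯.IsSChild S t c ∧ v ∈ 𝒯.Vt c \ 𝒯.bag t}

theorem sChildrenPart_inter (𝒯 : RootedTreeDecomp V ι G) (S : Set V) (t : ι) :
    𝒯.sChildrenPart S t ∩ S = 𝒯.LS S t := by
  ext v
  constructor
  · rintro ⟨⟨c, hc, hvc, hvt⟩, hvS⟩
    exact ⟨⟨Vt_subset_Vt hc.1.inSubtree hvc, hvt⟩, hvS⟩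
  · rintro ⟨hv, hvS⟩
    obtain ⟨c, hc, hvc⟩ := exists_isParent_mem_Vt_of_mem_Lt hv
    exact ⟨⟨c, isSChild_iff.mpr ⟨hc, v, ⟨hvc, hv.2⟩, hvS⟩, hvc, hv.2⟩, hvS⟩

theorem mem_sChildrenPart_of_reachableIn (h : G.ReachableIn (𝒯.bag t)ᶜ u v)
    (hu : u ∈ 𝒯.sChildrenPart S t) : v ∈ 𝒯.sChildrenPart S t := by
  obtain ⟨c, hc, huc⟩ := hu
  exact ⟨c, hc, mem_Vt_sdiff_bag_of_reachableIn hc.1 h huc⟩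

theorem LS_union_sChildBags_subset_sChildrenPart (𝒯 : RootedTreeDecomp V ι G) (S : Set V) (t : ι) :
    𝒯.LS S t ∪ ({u | ∃ c, 𝒯.IsSChild S t c ∧ u ∈ 𝒯.bag c} \ 𝒯.bag t) ⊆
      𝒯.sChildrenPart S t := by
  refine Set.union_subset ?_ ?_
  · rw [← sChildrenPart_inter]
    exact Set.inter_subset_left
  · rintro u ⟨⟨c, hc, huc⟩, hut⟩
    exact ⟨c, hc, 𝒯.bag_subset_Vt c huc, hut⟩

theorem exists_mem_LS_reachableIn (hv : v ∈ 𝒯.sChildrenPart S t)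
    (hS : (G.compOutside (𝒯.bag t) v ∩ S).Nonempty) :
    ∃ s ∈ 𝒯.LS S t, G.ReachableIn (𝒯.bag t)ᶜ v s := by
  obtain ⟨s, hvs, hsS⟩ := hS
  rw [← sChildrenPart_inter]
  exact ⟨s, ⟨mem_sChildrenPart_of_reachableIn hvs hv, hsS⟩, hvs⟩

end RootedTreeDecomp

open RootedTreeDecomp in
theorem statement15_general {V ι : Type} {G : SimpleGraph V} (S : Set V)
    (𝒯 : RootedTreeDecomp V ι G) (t : ι)
    (hFcomp : ∀ v, v ∉ 𝒯.bag t → G.compOutside (𝒯.bag t) v ∩ S = ∅ →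
      ∀ c, 𝒯.IsSChild S t c → v ∉ 𝒯.Vt c)
    (Xc VL : Set V)
    (hXc : Xc = {u | ∃ c, 𝒯.IsSChild S t c ∧ u ∈ 𝒯.bag c})
    (hVL : VL = {v | v ∈ 𝒯.LS S t ∪ (Xc \ 𝒯.bag t) ∨
      ∃ u ∈ 𝒯.LS S t ∪ (Xc \ 𝒯.bag t), G.ReachableIn (𝒯.bag t)ᶜ v u}) (v : V) :
    v ∈ VL ↔ ∃ c, 𝒯.IsSChild S t c ∧ v ∈ 𝒯.Vt c \ 𝒯.bag t := by
  subst hXc hVL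
  have hsources := 𝒯.LS_union_sChildBags_subset_sChildrenPart S t
  constructor
  · rintro (hv | ⟨u, hu, hvu⟩)
    · exact hsources hv
    · exact mem_sChildrenPart_of_reachableIn (reachableIn_symm hvu) (hsources hu)
  · rintro ⟨c, hc, hvc, hvt⟩
    have hS : (G.compOutside (𝒯.bag t) v ∩ S).Nonempty :=
      Set.nonempty_iff_ne_empty.mpr fun hempty ↦ hFcomp v hvt hempty c hc hvc
    obtain ⟨s, hs, hvs⟩ := exists_mem_LS_reachableIn ⟨c, hc, hvc, hvt⟩ hS
    exact Or.inr ⟨s, Or.inl hs, hvs⟩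

/-- (Lemma `lem:vl` of the paper.)  With `tmin` the bottom node
of the directed path of an `S`-trace with nonempty `L`-part in a slim `S`-nice
tree decomposition of the connected graph `G`, under the `F`-component assumption,
a vertex lies in `V_L` if and only if it lies in `V_t ∖ X_{tmin}` for some
`S`-child `t` of `tmin`. -/
theorem statement15 {V ι : Type} [Fintype V] [DecidableEq V] {G : SimpleGraph V}
    (hconn : G.Connected) (S : Set V) (k : ℕ)
    (𝒯 : RootedTreeDecomp V ι G)
    (hnice : 𝒯.IsSNice S) (hslim : 𝒯.IsSlim S k) (hw : 𝒯.HasWidth k)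
    (tmin : ι)
    (hL : (𝒯.LS S tmin).Nonempty)
    (hbot : ∀ t', 𝒯.STrace S t' = 𝒯.STrace S tmin → 𝒯.InSubtree t' tmin)
    (hFcomp : ∀ v, v ∉ 𝒯.bag tmin → G.compOutside (𝒯.bag tmin) v ∩ S = ∅ →
      ∀ t, 𝒯.IsSChild S tmin t → v ∉ 𝒯.Vt t)
    (Xc VL : Set V)
    (hXc : Xc = {u | ∃ t, 𝒯.IsSChild S tmin t ∧ u ∈ 𝒯.bag t})
    (hVL : VL = {v | v ∈ 𝒯.LS S tmin ∪ (Xc \ 𝒯.bag tmin) ∨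
      ∃ u ∈ 𝒯.LS S tmin ∪ (Xc \ 𝒯.bag tmin), G.ReachableIn (𝒯.bag tmin)ᶜ v u}) :
    ∀ v : V, v ∈ VL ↔ ∃ t, 𝒯.IsSChild S tmin t ∧ v ∈ 𝒯.Vt t \ 𝒯.bag tmin :=
  statement15_general S 𝒯 tmin hFcomp Xc VL hXc hVL
end
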